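/- arXiv:1001.0169 — 3 statements merged into one kernel-verified Lean document; each statement's English description precedes it below -/
import Mathlib

section
/- Let Γ be a group and Γ₀ a subgroup of Γ. Suppose that for every g ∈ Γ with g ∉ Γ₀, the set g·Γ₀·g⁻¹ ∩ Γ₀ = {y ∈ Γ₀ : g⁻¹ · y · g ∈ Γ₀} is finite. Then for all g₁, g₂ ∈ Γ with g₁ ∉ Γ₀ and g₂ ∉ Γ₀, the set g₁·Γ₀·g₂ ∩ Γ₀ = {y ∈ Γ₀ : g₁⁻¹ · y · g₂⁻¹ ∈ Γ₀} is finite. (Key step in the proof of Theorem 4.2, implication 2 ⇒ 1.) -/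
section

variable {G : Type*} [Group G] {H K : Subgroup G} {a : G}

theorem setOf_mem_and_inv_mul_mul_mem_eq_image_mul_right
    {b z : G} (hzH : z ∈ H) (hzK : a⁻¹ * z * b ∈ K) :
    {y : G | y ∈ H ∧ a⁻¹ * y * b ∈ K} =
      (· * z) '' {y : G | y ∈ H ∧ a⁻¹ * y * a ∈ K} := by
  ext y
  have factor : a⁻¹ * y * b = a⁻¹ * (y * z⁻¹) * a * (a⁻¹ * z * b) := by group
  rw [Set.image_mul_right, Set.mem_preimage, Set.mem_ofPred_eq, Set.mem_ofPred_eq, factor,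
    K.mul_mem_cancel_right hzK, H.mul_mem_cancel_right (H.inv_mem hzH)]

theorem finite_double_coset_inter_of_finite_conjugate_inter_general
    (hfin : {y : G | y ∈ H ∧ a⁻¹ * y * a ∈ K}.Finite) (b : G) :
    {y : G | y ∈ H ∧ a⁻¹ * y * b ∈ K}.Finite := by
  obtain hempty | ⟨z, hzH, hzK⟩ :=
    {y : G | y ∈ H ∧ a⁻¹ * y * b ∈ K}.eq_empty_or_nonempty
  · exact hempty ▸ Set.finite_empty
  · exact setOf_mem_and_inv_mul_mul_mem_eq_image_mul_right hzH hzK ▸ hfin.image (· * z)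

end

/-- Key step in the proof of Theorem 4.2, implication 2 ⇒ 1: if `g Γ₀ g⁻¹ ∩ Γ₀` is finite for
every `g ∉ Γ₀`, then `g₁ Γ₀ g₂ ∩ Γ₀` is finite for all `g₁, g₂ ∉ Γ₀`. -/
theorem finite_double_coset_inter_of_finite_conjugate_inter
    {Γ : Type*} [Group Γ] (Γ₀ : Subgroup Γ)
    (h : ∀ g : Γ, g ∉ Γ₀ → {y : Γ | y ∈ Γ₀ ∧ g⁻¹ * y * g ∈ Γ₀}.Finite) :
    ∀ g₁ g₂ : Γ, g₁ ∉ Γ₀ → g₂ ∉ Γ₀ →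
      {y : Γ | y ∈ Γ₀ ∧ g₁⁻¹ * y * g₂⁻¹ ∈ Γ₀}.Finite := by
  intro g₁ g₂ hg₁ _
  exact finite_double_coset_inter_of_finite_conjugate_inter_general (h g₁ hg₁) g₂⁻¹
end

section
/- Let N and H be groups and φ : H → Aut(N) a group homomorphism, and form the semidirect product Γ = N ⋊_φ H with canonical embeddings i : N → Γ and j : H → Γ. Then the following are equivalent: (1) for every n ∈ N with n ≠ 1, the stabilizer {h ∈ H : φ(h)(n) = n} is a finite set; (2) for every x ∈ Γ with x ∉ j(H), the set x·j(H)·x⁻¹ ∩ j(H) = {y ∈ j(H) : x⁻¹ · y · x ∈ j(H)} is finite. (Group-theoretic content of Proposition 4.3.) -/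
/-! For `x = n h₀`, conjugation by `h₀` preserves `j(H)`, so `x⁻¹ j(h) x ∈ j(H)` only depends on
`n`; and `n⁻¹ j(h) n = (n⁻¹ φ(h)(n)) j(h)` lies in `j(H)` exactly when `h` fixes `n`. Hence
`x j(H) x⁻¹ ∩ j(H)` is the image under `j` of the stabilizer of `n`. -/

section

open SemidirectProduct

variable {N H : Type*} [Group N] [Group H] {φ : H →* MulAut N}

theorem mem_range_inr_iff_left_eq_one {x : N ⋊[φ] H} :
    x ∈ (inr : H →* N ⋊[φ] H).range ↔ x.left = 1 := by
  constructor
  · rintro ⟨h, rfl⟩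
    exact left_inr h
  · intro left_eq_one
    exact ⟨x.right, SemidirectProduct.ext left_eq_one.symm rfl⟩

theorem left_inv_mul_inr_mul (x : N ⋊[φ] H) (h : H) :
    (x⁻¹ * inr h * x).left = φ x.right⁻¹ (x.left⁻¹ * φ h x.left) := by
  simp

theorem inv_mul_inr_mul_mem_range_inr_iff {x : N ⋊[φ] H} {h : H} :
    x⁻¹ * inr h * x ∈ (inr : H →* N ⋊[φ] H).range ↔ φ h x.left = x.left := by
  rw [mem_range_inr_iff_left_eq_one, left_inv_mul_inr_mul, EmbeddingLike.map_eq_one_iff,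
    inv_mul_eq_one, eq_comm]

theorem range_inr_inter_conj_eq_image_stabilizer (x : N ⋊[φ] H) :
    {y : N ⋊[φ] H | y ∈ (inr : H →* N ⋊[φ] H).range ∧
      x⁻¹ * y * x ∈ (inr : H →* N ⋊[φ] H).range} =
    (inr : H →* N ⋊[φ] H) '' {h : H | φ h x.left = x.left} := by
  simp only [← inv_mul_inr_mul_mem_range_inr_iff]
  exact Set.image_preimage_eq_range_inter.symm

theorem finite_range_inr_inter_conj_iff (x : N ⋊[φ] H) :
    {y : N ⋊[φ] H | y ∈ (inr : H →* N ⋊[φ] H).range ∧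
      x⁻¹ * y * x ∈ (inr : H →* N ⋊[φ] H).range}.Finite ↔
    {h : H | φ h x.left = x.left}.Finite := by
  rw [range_inr_inter_conj_eq_image_stabilizer, Set.finite_image_iff inr_injective.injOn]

end

/-- Group-theoretic content of Proposition 4.3: in `Γ = N ⋊[φ] H`, every nontrivial `n ∈ N` has
finite stabilizer in `H` iff for every `x ∉ j(H)` the set `x j(H) x⁻¹ ∩ j(H)` is finite. -/
theorem semidirectProduct_finite_stabilizers_iff_finite_conjugate_inter
    {N H : Type*} [Group N] [Group H] (φ : H →* MulAut N) :
    (∀ n : N, n ≠ 1 → {h : H | φ h n = n}.Finite) ↔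
      (∀ x : N ⋊[φ] H, x ∉ (SemidirectProduct.inr : H →* N ⋊[φ] H).range →
        {y : N ⋊[φ] H | y ∈ (SemidirectProduct.inr : H →* N ⋊[φ] H).range ∧
          x⁻¹ * y * x ∈ (SemidirectProduct.inr : H →* N ⋊[φ] H).range}.Finite) := by
  simp only [finite_range_inr_inter_conj_iff]
  simp only [mem_range_inr_iff_left_eq_one]
  constructor
  · intro finite_stabilizer x hx
    exact finite_stabilizer x.left hx
  · intro finite_stabilizer_left n hn
    exact finite_stabilizer_left (SemidirectProduct.inl n) hn
end

section
/- Let Γ be a group and Γ₀ a subgroup of Γ. Then the following are equivalent: (1) for every g ∈ Γ with g ∉ Γ₀, the set g·Γ₀·g⁻¹ ∩ Γ₀ = {y ∈ Γ₀ : g⁻¹ · y · g ∈ Γ₀} is finite; (2) for every finite subset C ⊆ Γ with C ∩ Γ₀ = ∅, there exists a finite subset E ⊆ Γ₀ such that for all γ ∈ Γ₀ with γ ∉ E and all g, h ∈ C, one has g·γ·h ∉ Γ₀. (Equivalence of condition 2 of Theorem 4.2 with the condition (ST) of Jolissaint–Stalder.) -/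
theorem exists_finite_forall_mul_mul_notMem_iff {M : Type*} [Mul M] {A B C : Set M}
    (hC : C.Finite) :
    (∃ E : Set M, E.Finite ∧ E ⊆ A ∧ ∀ x ∈ A, x ∉ E → ∀ g ∈ C, ∀ h ∈ C, g * x * h ∉ B) ↔
      ∀ g ∈ C, ∀ h ∈ C, {x | x ∈ A ∧ g * x * h ∈ B}.Finite := by
  constructor
  · rintro ⟨E, hE, -, hEB⟩ g hg h hh
    refine hE.subset fun x ⟨hxA, hxB⟩ ↦ ?_
    by_contra hxE
    exact hEB x hxA hxE g hg h hh hxB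
  · intro hfin
    refine ⟨⋃ g ∈ C, ⋃ h ∈ C, {x | x ∈ A ∧ g * x * h ∈ B},
      hC.biUnion fun g hg ↦ hC.biUnion fun h hh ↦ hfin g hg h hh,
      Set.iUnion₂_subset fun g _ ↦ Set.iUnion₂_subset fun h _ x hx ↦ hx.1, ?_⟩
    intro x hxA hxE g hg h hh hxB
    exact hxE (Set.mem_biUnion hg (Set.mem_biUnion hh ⟨hxA, hxB⟩))

section

variable {G : Type*} [Group G] {H K : Subgroup G} {g : G}

theorem conj_mul_inv_mem_of_mul_mul_mem {h x y : G} (hx : g * x * h ∈ K) (hy : g * y * h ∈ K) :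
    g * (x * y⁻¹) * g⁻¹ ∈ K := by
  have hquot : g * (x * y⁻¹) * g⁻¹ = g * x * h * (g * y * h)⁻¹ := by group
  rw [hquot]
  exact K.mul_mem hx (K.inv_mem hy)

-- Right translation by the inverse of one solution maps the solutions for `(g, h)` injectively
-- into those for `(g, g⁻¹)`.
theorem finite_setOf_mul_mul_mem_of_finite_conj (hfin : {x | x ∈ H ∧ g * x * g⁻¹ ∈ K}.Finite)
    (h : G) : {x | x ∈ H ∧ g * x * h ∈ K}.Finite := by
  rcases {x | x ∈ H ∧ g * x * h ∈ K}.eq_empty_or_nonempty with hempty | ⟨y, hyH, hyK⟩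
  · exact hempty ▸ Set.finite_empty
  · refine (hfin.preimage (mul_left_injective y⁻¹).injOn).subset fun x ⟨hxH, hxK⟩ ↦ ?_
    exact ⟨H.mul_mem hxH (H.inv_mem hyH), conj_mul_inv_mem_of_mul_mul_mem hxK hyK⟩

end

/-- Equivalence of condition 2 of Theorem 4.2 with the condition (ST) of Jolissaint–Stalder. -/
theorem finite_conjugate_inter_iff_condition_ST
    {Γ : Type*} [Group Γ] (Γ₀ : Subgroup Γ) :
    (∀ g : Γ, g ∉ Γ₀ → {y : Γ | y ∈ Γ₀ ∧ g⁻¹ * y * g ∈ Γ₀}.Finite) ↔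
      (∀ C : Set Γ, C.Finite → C ∩ (Γ₀ : Set Γ) = ∅ →
        ∃ E : Set Γ, E.Finite ∧ E ⊆ (Γ₀ : Set Γ) ∧
          ∀ γ ∈ Γ₀, γ ∉ E → ∀ g ∈ C, ∀ h ∈ C, g * γ * h ∉ Γ₀) := by
  constructor
  · intro hconj C hC hdisj
    refine (exists_finite_forall_mul_mul_notMem_iff hC).2 fun g hg h _ ↦ ?_
    have hg_inv : g⁻¹ ∉ Γ₀ := fun hmem ↦
      Set.disjoint_left.1 (Set.disjoint_iff_inter_eq_empty.2 hdisj) hg (Γ₀.inv_mem_iff.1 hmem)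
    have hfin : {y | y ∈ Γ₀ ∧ g * y * g⁻¹ ∈ Γ₀}.Finite := by
      simpa only [inv_inv] using hconj g⁻¹ hg_inv
    exact finite_setOf_mul_mul_mem_of_finite_conj hfin h
  · intro hST g hg
    have hdisj : ({g⁻¹, g} : Set Γ) ∩ Γ₀ = ∅ := by
      simp [← Set.disjoint_iff_inter_eq_empty, hg]
    have hpair : ({g⁻¹, g} : Set Γ).Finite := Set.toFinite _
    exact (exists_finite_forall_mul_mul_notMem_iff hpair).1 (hST _ hpair hdisj)
      g⁻¹ (by simp) g (by simp)
end
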